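/- arXiv:2306.03888 — 2 statements merged into one kernel-verified Lean document; each statement's English description precedes it below -/
import Mathlib

section
/- For every n ≥ 2: the coefficient of the monomial X in α_n equals 1, the coefficient of X^n in α_n equals 1, the coefficient of Y^n in α_n equals 1, and for every k with 0 ≤ k < n the coefficient of Y^k in α_n equals 0. -/
open MvPolynomial

/-- The 2×2 matrix over `𝔽₂[X,Y]` with rows `(X+Y, 1)` and `(X, 1)`. -/
noncomputable def stmtM : Matrix (Fin 2) (Fin 2) (MvPolynomial (Fin 2) (ZMod 2)) :=
  !![X 0 + X 1, 1; X 0, 1]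

/-- `α_n` is the `(1,1)` entry of the `n`-th power of `stmtM`. -/
noncomputable def stmtAlpha (n : ℕ) : MvPolynomial (Fin 2) (ZMod 2) :=
  (stmtM ^ n) 0 0

noncomputable def hB (n : ℕ) : MvPolynomial (Fin 2) (ZMod 2) := (stmtM ^ n) 0 1

lemma hA_succ (n : ℕ) : stmtAlpha (n+1) = stmtAlpha n * X 0 + stmtAlpha n * X 1 + hB n * X 0 := by
  simp [stmtAlpha, hB, pow_succ, Matrix.mul_apply, Fin.sum_univ_two, stmtM, mul_add]

lemma hB_succ (n : ℕ) : hB (n+1) = stmtAlpha n + hB n := by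
  simp [stmtAlpha, hB, pow_succ, Matrix.mul_apply, Fin.sum_univ_two, stmtM]

lemma hA_zero : stmtAlpha 0 = 1 := by simp [stmtAlpha]
lemma hB_zero : hB 0 = 0 := by simp [hB]

lemma c_same (i : Fin 2) (m : ℕ) (p : MvPolynomial (Fin 2) (ZMod 2)) :
    coeff (Finsupp.single i (m+1)) (p * X i) = coeff (Finsupp.single i m) p := by
  rw [Finsupp.single_add, coeff_mul_X]

lemma c_zero (i j : Fin 2) (p : MvPolynomial (Fin 2) (ZMod 2)) :
    coeff (Finsupp.single i 0) (p * X j) = 0 := by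
  rw [coeff_mul_X']; simp

lemma c_ne (i j : Fin 2) (h : i ≠ j) (m : ℕ) (p : MvPolynomial (Fin 2) (ZMod 2)) :
    coeff (Finsupp.single i m) (p * X j) = 0 := by
  rw [coeff_mul_X', if_neg]
  simp [Finsupp.single_apply, h]

lemma cY (n : ℕ) : ∀ k, coeff (Finsupp.single 1 k) (stmtAlpha n) = if k = n then 1 else 0 := by
  induction n with
  | zero => intro k; simp [hA_zero, coeff_one, eq_comm]
  | succ n ih =>
    intro k
    rw [hA_succ, coeff_add, coeff_add, c_ne 1 0 (by decide), c_ne 1 0 (by decide)]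
    cases k with
    | zero => rw [c_zero]; simp
    | succ k => rw [c_same, ih]; simp

lemma cX (n : ℕ) : coeff (Finsupp.single 0 n) (stmtAlpha n) = 1 ∧
    (∀ m, n < m → coeff (Finsupp.single 0 m) (stmtAlpha n) = 0) ∧
    ∀ m, n ≤ m → coeff (Finsupp.single 0 m) (hB n) = 0 := by
  induction n with
  | zero =>
    refine ⟨by simp [hA_zero], fun m hm => ?_, by simp [hB_zero]⟩
    rw [hA_zero, coeff_one, if_neg]
    intro h
    have := DFunLike.congr_fun h 0
    simp at this
    omega
  | succ n ih =>
    obtain ⟨h1, h2, h3⟩ := ih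
    refine ⟨?_, fun m hm => ?_, fun m hm => ?_⟩
    · rw [hA_succ, coeff_add, coeff_add, c_ne 0 1 (by decide), c_same, c_same, h1, h3 n le_rfl]
      simp
    · obtain ⟨m, rfl⟩ : ∃ k, m = k + 1 := ⟨m - 1, by omega⟩
      rw [hA_succ, coeff_add, coeff_add, c_ne 0 1 (by decide), c_same, c_same,
        h2 m (by omega), h3 m (by omega)]
      simp
    · rw [hB_succ, coeff_add, h2 m (by omega), h3 m (by omega)]
      simp

lemma cA0 (n : ℕ) : coeff (Finsupp.single 0 0) (stmtAlpha (n+1)) = 0 := by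
  rw [hA_succ, coeff_add, coeff_add, c_zero, c_zero, c_zero]; simp

lemma cB0 (n : ℕ) : coeff (Finsupp.single 0 0) (hB (n+1)) = 1 := by
  induction n with
  | zero => simp [hB_succ, hA_zero, hB_zero]
  | succ n ih => rw [hB_succ, coeff_add, ih, cA0]; simp

/-- For `n ≥ 2`, in `α_n` the coefficient of `X` is `1`, the coefficient
of `X^n` is `1`, the coefficient of `Y^n` is `1`, and the coefficient of `Y^k` is `0`
for every `0 ≤ k < n`. -/
theorem stmt_2 (n : ℕ) (hn : 2 ≤ n) :
    coeff (Finsupp.single 0 1) (stmtAlpha n) = 1 ∧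
    coeff (Finsupp.single 0 n) (stmtAlpha n) = 1 ∧
    coeff (Finsupp.single 1 n) (stmtAlpha n) = 1 ∧
    ∀ k : ℕ, k < n → coeff (Finsupp.single 1 k) (stmtAlpha n) = 0 := by
  refine ⟨?_, (cX n).1, by simp [cY], fun k hk => by rw [cY, if_neg hk.ne]⟩
  obtain ⟨m, rfl⟩ : ∃ k, n = k + 1 + 1 := ⟨n - 2, by omega⟩
  have h := c_same 0 0
  rw [zero_add] at h
  rw [hA_succ, coeff_add, coeff_add, c_ne 0 1 (by decide), h, h, cA0, cB0]
  simp
end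

section
/- Let R be an integral domain and k ≥ 1. For every R-algebra automorphism φ of the Laurent polynomial ring A_k = R[s_1^{±1}, …, s_k^{±1}] (the group algebra of ℤ^k over R, with R-basis of monomials X^v for v ∈ ℤ^k), there exist units α_1, …, α_k ∈ Rˣ and a matrix A ∈ GL(k,ℤ) such that φ(X^v) = (∏_{i=1}^k α_i^{v_i}) · X^{A v} for all v ∈ ℤ^k. -/
theorem aux_unit_monomial {R : Type*} [CommRing R] [IsDomain R] {G : Type*} [AddCommGroup G]
    [TwoUniqueSums G] (f g : AddMonoidAlgebra R G) (h : f * g = 1) :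
    ∃ (m : G) (c : R), c ≠ 0 ∧ f = AddMonoidAlgebra.single m c := by
  classical
  have hf : f ≠ 0 := by
    rintro rfl
    rw [zero_mul] at h
    have := congrArg (fun x => AddMonoidAlgebra.coeff x 0) h
    simp [AddMonoidAlgebra.one_def] at this
  have hg : g ≠ 0 := by
    rintro rfl
    rw [mul_zero] at h
    have := congrArg (fun x => AddMonoidAlgebra.coeff x 0) h
    simp [AddMonoidAlgebra.one_def] at this
  have hfc : 0 < f.coeff.support.card := by
    rw [Finset.card_pos, Finsupp.support_nonempty_iff]
    simpa using hf
  have hgc : 0 < g.coeff.support.card := by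
    rw [Finset.card_pos, Finsupp.support_nonempty_iff]
    simpa using hg
  have key : ∀ a b : G, a ∈ f.coeff.support → b ∈ g.coeff.support →
      UniqueAdd f.coeff.support g.coeff.support a b → a + b = 0 := by
    intro a b ha hb hu
    by_contra hne
    have h1 := AddMonoidAlgebra.coeff_mul_add_of_uniqueAdd hu
    rw [h, AddMonoidAlgebra.one_def, AddMonoidAlgebra.coeff_single,
      Finsupp.single_eq_of_ne hne] at h1
    exact mul_ne_zero (Finsupp.mem_support_iff.1 ha) (Finsupp.mem_support_iff.1 hb) h1.symm
  have hle : ¬ 1 < f.coeff.support.card * g.coeff.support.card := by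
    intro hlt
    obtain ⟨p, hp, q, hq, hne, hup, huq⟩ := TwoUniqueSums.uniqueAdd_of_one_lt_card hlt
    rw [Finset.mem_product] at hp hq
    have e1 := key _ _ hp.1 hp.2 hup
    have e2 := key _ _ hq.1 hq.2 huq
    have := hup hq.1 hq.2 (e2.trans e1.symm)
    exact hne (Prod.ext this.1.symm this.2.symm)
  have hone : f.coeff.support.card = 1 := by nlinarith
  obtain ⟨m, hm⟩ := Finset.card_eq_one.1 hone
  obtain ⟨h1, h2⟩ := Finsupp.support_eq_singleton.1 hm
  refine ⟨m, f.coeff m, h1, ?_⟩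
  rw [← AddMonoidAlgebra.coeff_inj, AddMonoidAlgebra.coeff_single]
  exact h2

theorem aux_map {R : Type*} [CommRing R] [IsDomain R] {G : Type*} [AddCommGroup G]
    [TwoUniqueSums G] (φ : AddMonoidAlgebra R G ≃ₐ[R] AddMonoidAlgebra R G) (v : G) :
    ∃ (m : G) (c : R), c ≠ 0 ∧
      φ (AddMonoidAlgebra.single v 1) = AddMonoidAlgebra.single m c := by
  apply aux_unit_monomial _ (φ (AddMonoidAlgebra.single (-v) 1))
  rw [← map_mul, AddMonoidAlgebra.single_mul_single]
  simp [← AddMonoidAlgebra.one_def]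

/-- Every `R`-algebra automorphism of the Laurent polynomial ring
`A_k = R[s₁^{±1}, …, s_k^{±1}]` (the group algebra of `ℤ^k` over the integral
domain `R`) is of the form `X^v ↦ (∏ i, αᵢ^{vᵢ}) · X^{A v}` for some units
`α₁, …, α_k ∈ Rˣ` and some `A ∈ GL(k,ℤ)`. -/
theorem stmt_13 {R : Type*} [CommRing R] [IsDomain R] (k : ℕ) (hk : 1 ≤ k)
    (φ : AddMonoidAlgebra R (Fin k → ℤ) ≃ₐ[R] AddMonoidAlgebra R (Fin k → ℤ)) :
    ∃ (α : Fin k → Rˣ) (A : Matrix.GeneralLinearGroup (Fin k) ℤ),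
      ∀ v : Fin k → ℤ,
        φ (AddMonoidAlgebra.single v 1)
          = AddMonoidAlgebra.single ((A : Matrix (Fin k) (Fin k) ℤ).mulVec v)
              ((∏ i, α i ^ v i : Rˣ) : R) := by
  classical
  choose m c hc hm using aux_map φ
  choose m' c' hc' hm' using aux_map φ.symm
  have hadd : ∀ v w, m (v + w) = m v + m w ∧ c (v + w) = c v * c w := by
    intro v w
    have h1 : φ (AddMonoidAlgebra.single (v + w) 1) =
        φ (AddMonoidAlgebra.single v 1) * φ (AddMonoidAlgebra.single w 1) := by
      rw [← map_mul, AddMonoidAlgebra.single_mul_single, one_mul]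
    rw [hm, hm, hm, AddMonoidAlgebra.single_mul_single, AddMonoidAlgebra.single_inj] at h1
    rcases h1 with h1 | h1
    · exact h1
    · exact absurd h1.1 (hc _)
  have hinv : ∀ (ψ : AddMonoidAlgebra R (Fin k → ℤ) ≃ₐ[R] AddMonoidAlgebra R (Fin k → ℤ))
      (m m' : (Fin k → ℤ) → (Fin k → ℤ)) (c c' : (Fin k → ℤ) → R),
      (∀ v, ψ (AddMonoidAlgebra.single v 1) = AddMonoidAlgebra.single (m v) (c v)) →
      (∀ v, ψ.symm (AddMonoidAlgebra.single v 1) = AddMonoidAlgebra.single (m' v) (c' v)) →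
      ∀ v, m (m' v) = v := by
    intro ψ m m' c c' hm hm' v
    have h1 := ψ.apply_symm_apply (AddMonoidAlgebra.single v 1)
    have h2 : AddMonoidAlgebra.single (m' v) (c' v) =
        c' v • (AddMonoidAlgebra.single (m' v) 1 : AddMonoidAlgebra R (Fin k → ℤ)) := by
      rw [AddMonoidAlgebra.smul_single', mul_one]
    rw [hm', h2, map_smul, hm, AddMonoidAlgebra.smul_single', AddMonoidAlgebra.single_inj] at h1
    rcases h1 with h1 | h1
    · exact h1.1
    · exact absurd h1.2 one_ne_zero
  have hr := hinv φ m m' c c' hm hm'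
  have hl := hinv φ.symm m' m c' c hm' (by simpa using hm)
  let M : (Fin k → ℤ) ≃+ (Fin k → ℤ) :=
    { toFun := m, invFun := m', left_inv := hl, right_inv := hr,
      map_add' := fun v w => (hadd v w).1 }
  let L : (Fin k → ℤ) ≃ₗ[ℤ] (Fin k → ℤ) := M.toIntLinearEquiv
  have hc0 : c 0 = 1 := by
    have := (hadd 0 0).2
    rw [add_zero] at this
    exact (mul_eq_left₀ (hc 0)).1 this.symm
  let C : Multiplicative (Fin k → ℤ) →* R :=
    { toFun := fun v => c v.toAdd, map_one' := hc0,
      map_mul' := fun v w => (hadd v.toAdd w.toAdd).2 }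
  let U : Multiplicative (Fin k → ℤ) →* Rˣ := C.toHomUnits
  have hU : ∀ v, ((U (Multiplicative.ofAdd v) : Rˣ) : R) = c v := fun v => rfl
  refine ⟨fun i => U (Multiplicative.ofAdd (Pi.single i 1)),
    ⟨LinearMap.toMatrix' L.toLinearMap, LinearMap.toMatrix' L.symm.toLinearMap, ?_, ?_⟩, ?_⟩
  · rw [← LinearMap.toMatrix'_comp]; simp
  · rw [← LinearMap.toMatrix'_comp]; simp
  · intro v
    have h1 : (LinearMap.toMatrix' L.toLinearMap).mulVec v = m v := by
      rw [LinearMap.toMatrix'_mulVec]; rfl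
    have h2 : ∏ i, U (Multiplicative.ofAdd (Pi.single i 1)) ^ v i =
        U (Multiplicative.ofAdd v) := by
      simp_rw [← map_zpow, ← map_prod, ← ofAdd_zsmul, ← ofAdd_sum]
      congr 2
      ext j
      simp [Finset.sum_apply, Pi.single_apply]
    rw [h2, hU, hm]
    exact congrArg (fun x => AddMonoidAlgebra.single x (c v)) h1.symm
end
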